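/- arXiv:1610.01377 — 2 statements merged into one kernel-verified Lean document; each statement's English description precedes it below -/
import Mathlib

section
/- Let 1 ≤ d < r and let M be a representation of Γ_r. Then M has constant d-socle rank if and only if there exists c ∈ ℕ₀ such that dim_k Hom(X_U, M) = c for all U ∈ Gr_{d,r}. -/
open Module LinearMap

universe u

/-- A finite-dimensional representation of the `r`-Kronecker quiver `Γ_r` over `k`:
two finite-dimensional `k`-vector spaces `M₁`, `M₂` and `r` linear maps `M₁ → M₂`. -/
structure KRep (k : Type u) [Field k] (r : ℕ) : Type (u + 1) where
  V1 : Type u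
  V2 : Type u
  [addV1 : AddCommGroup V1]
  [addV2 : AddCommGroup V2]
  [modV1 : Module k V1]
  [modV2 : Module k V2]
  [finV1 : FiniteDimensional k V1]
  [finV2 : FiniteDimensional k V2]
  f : Fin r → V1 →ₗ[k] V2

attribute [instance] KRep.addV1 KRep.addV2 KRep.modV1 KRep.modV2 KRep.finV1 KRep.finV2

variable {k : Type u} [Field k] {r : ℕ}

/-- For `α ∈ k^r`, the operator `x^M_α = ∑ i, αᵢ • M(γᵢ) : M₁ → M₂`. -/
def KRep.x (M : KRep k r) (α : Fin r → k) : M.V1 →ₗ[k] M.V2 :=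
  ∑ i, α i • M.f i

/-- The space `Hom(M, N)` of morphisms of representations, as a `k`-submodule of the
pairs of linear maps `(f₁ : M₁ → N₁, f₂ : M₂ → N₂)`; membership is the condition
`f₂ ∘ M(γᵢ) = N(γᵢ) ∘ f₁` for all `i`. -/
def KHom (M N : KRep k r) : Submodule k ((M.V1 →ₗ[k] N.V1) × (M.V2 →ₗ[k] N.V2)) where
  carrier := {p | ∀ i, p.2 ∘ₗ M.f i = N.f i ∘ₗ p.1}
  add_mem' := by
    intro a b ha hb i
    simp only [Prod.snd_add, Prod.fst_add, LinearMap.add_comp, LinearMap.comp_add, ha i, hb i]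
  zero_mem' := by intro i; simp
  smul_mem' := by
    intro c a ha i
    simp only [Prod.smul_snd, Prod.smul_fst, LinearMap.smul_comp, LinearMap.comp_smul, ha i]

/-- The representation `X_U` attached to a subspace `U ⊆ k^r`:
`(X_U)₁ = k`, `(X_U)₂ = k^r/U`, and `X_U(γᵢ)(c) = c · (eᵢ + U)`. -/
def XU (U : Submodule k (Fin r → k)) : KRep k r where
  V1 := k
  V2 := (Fin r → k) ⧸ U
  f := fun i => LinearMap.toSpanSingleton k _ (Submodule.Quotient.mk (Pi.single i 1))

/-- The `M₁`-part of the socle: `{m ∈ M₁ : x^M_u(m) = 0 for all u ∈ U}`. -/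
def KRep.socKer (M : KRep k r) (U : Submodule k (Fin r → k)) : Submodule k M.V1 :=
  ⨅ u ∈ U, LinearMap.ker (M.x u)

/-- `Soc_U(M) = {m ∈ M₁ : x^M_u(m) = 0 ∀ u ∈ U} ⊕ M₂`, as a subspace of `M₁ ⊕ M₂`. -/
def KRep.soc (M : KRep k r) (U : Submodule k (Fin r → k)) : Submodule k (M.V1 × M.V2) :=
  (M.socKer U).prod ⊤

/-- `Rad_U(M) = ∑_{u ∈ U} x^M_u(M₁) ⊆ M₂`. -/
def KRep.rad (M : KRep k r) (U : Submodule k (Fin r → k)) : Submodule k M.V2 :=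
  ⨆ u ∈ U, LinearMap.range (M.x u)

/-- Direct sum of two representations. -/
def KRep.sum (M N : KRep k r) : KRep k r where
  V1 := M.V1 × N.V1
  V2 := M.V2 × N.V2
  f := fun i => (M.f i).prodMap (N.f i)

/-- Isomorphism of representations. -/
def KIso (M N : KRep k r) : Prop :=
  ∃ (e1 : M.V1 ≃ₗ[k] N.V1) (e2 : M.V2 ≃ₗ[k] N.V2),
    ∀ i, (e2 : M.V2 →ₗ[k] N.V2) ∘ₗ M.f i = N.f i ∘ₗ (e1 : M.V1 →ₗ[k] N.V1)

/-- A representation is nonzero if its dimension vector is not `(0,0)`. -/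
def KRep.Nonzero (M : KRep k r) : Prop :=
  finrank k M.V1 ≠ 0 ∨ finrank k M.V2 ≠ 0

/-- A representation is indecomposable if it is nonzero and not isomorphic to a direct
sum of two nonzero representations. -/
def KRep.Indecomposable (M : KRep k r) : Prop :=
  M.Nonzero ∧ ∀ A B : KRep k r, A.Nonzero → B.Nonzero → ¬ KIso M (A.sum B)

/-- A representation is simple if its dimension vector is `(1,0)` or `(0,1)`. -/
def KRep.IsSimple (M : KRep k r) : Prop :=
  (finrank k M.V1 = 1 ∧ finrank k M.V2 = 0) ∨ (finrank k M.V1 = 0 ∧ finrank k M.V2 = 1)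

/-- `M` has constant `d`-socle rank: `dim_k Soc_U(M)` is independent of `U ∈ Gr_{d,r}`. -/
def KRep.ConstSocRank (d : ℕ) (M : KRep k r) : Prop :=
  ∃ c : ℕ, ∀ U : Submodule k (Fin r → k), finrank k U = d → finrank k (M.soc U) = c

/-- `M` has the equal `d`-socle property: `Soc_U(M)` is independent of `U ∈ Gr_{d,r}`. -/
def KRep.ESP (d : ℕ) (M : KRep k r) : Prop :=
  ∀ U V : Submodule k (Fin r → k), finrank k U = d → finrank k V = d → M.soc U = M.soc V

/-- `M` has constant `d`-radical rank: `dim_k Rad_U(M)` is independent of `U ∈ Gr_{d,r}`. -/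
def KRep.ConstRadRank (d : ℕ) (M : KRep k r) : Prop :=
  ∃ c : ℕ, ∀ U : Submodule k (Fin r → k), finrank k U = d → finrank k (M.rad U) = c

/-- `M` has the equal `d`-radical property: `Rad_U(M)` is independent of `U ∈ Gr_{d,r}`. -/
def KRep.ERP (d : ℕ) (M : KRep k r) : Prop :=
  ∀ U V : Submodule k (Fin r → k), finrank k U = d → finrank k V = d → M.rad U = M.rad V

/-- Evaluation `α ↦ x^M_α(m)` as a linear map. -/
def KRep.ev (M : KRep k r) (m : M.V1) : (Fin r → k) →ₗ[k] M.V2 where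
  toFun α := M.x α m
  map_add' a b := by
    simp [KRep.x, add_smul, Finset.sum_add_distrib]
  map_smul' c a := by
    simp [KRep.x, Finset.smul_sum, mul_smul]

theorem KRep.ev_single (M : KRep k r) (m : M.V1) (i : Fin r) :
    M.ev m (Pi.single i 1) = M.f i m := by
  change M.x _ m = _
  simp [KRep.x, Pi.single_apply]

theorem KRep.mem_socKer (M : KRep k r) (U : Submodule k (Fin r → k)) (m : M.V1) :
    m ∈ M.socKer U ↔ ∀ u ∈ U, M.ev m u = 0 := by
  simp [KRep.socKer, KRep.ev]

theorem mem_KHom_XU (U : Submodule k (Fin r → k)) (M : KRep k r)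
    (g : k →ₗ[k] M.V1) (h : ((Fin r → k) ⧸ U) →ₗ[k] M.V2) :
    ((g, h) : ((XU U).V1 →ₗ[k] M.V1) × ((XU U).V2 →ₗ[k] M.V2)) ∈ KHom (XU U) M ↔
      h ∘ₗ U.mkQ = M.ev (g 1) := by
  constructor
  · intro H
    refine LinearMap.pi_ext' fun i => LinearMap.ext_ring ?_
    have h1 := LinearMap.congr_fun (H i) (1 : k)
    have h2 : h (Submodule.Quotient.mk (Pi.single i 1)) = M.f i (g 1) := by
      rw [← one_smul k (Submodule.Quotient.mk (Pi.single i 1) : (Fin r → k) ⧸ U)]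
      exact h1
    change h (Submodule.Quotient.mk (Pi.single i 1)) = M.ev (g 1) (Pi.single i 1)
    rw [M.ev_single, h2]
  · intro H i
    refine LinearMap.ext_ring (R := k) ?_
    have h1 := LinearMap.congr_fun H (Pi.single i 1)
    rw [M.ev_single] at h1
    change h ((1 : k) • (Submodule.Quotient.mk (Pi.single i 1))) = M.f i (g 1)
    rw [one_smul]
    exact h1

/-- Evaluation of the first component at `1`. -/
def homEval (U : Submodule k (Fin r → k)) (M : KRep k r) : KHom (XU U) M →ₗ[k] M.V1 where
  toFun p := p.1.1 (1 : k)
  map_add' _ _ := rfl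
  map_smul' _ _ := rfl

theorem homEval_injective (U : Submodule k (Fin r → k)) (M : KRep k r) :
    Function.Injective (homEval U M) := by
  rintro ⟨⟨g, h⟩, H⟩ ⟨⟨g2, h2⟩, H2⟩ e
  change g (1 : k) = g2 (1 : k) at e
  have a := (mem_KHom_XU U M g h).1 H
  have a2 := (mem_KHom_XU U M g2 h2).1 H2
  have hg : g = g2 := LinearMap.ext_ring (R := k) e
  have hh : h = h2 := by
    refine Submodule.linearMap_qext (p := U) ?_
    exact a.trans ((congrArg M.ev e).trans a2.symm)
  subst hg hh
  rfl

theorem homEval_range (U : Submodule k (Fin r → k)) (M : KRep k r) :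
    LinearMap.range (homEval U M) = M.socKer U := by
  ext m
  rw [M.mem_socKer]
  constructor
  · rintro ⟨⟨⟨g, h⟩, H⟩, rfl⟩ u hu
    have a := (mem_KHom_XU U M g h).1 H
    change M.ev (g (1 : k)) u = 0
    refine (LinearMap.congr_fun a u).symm.trans ?_
    refine (congrArg h ((Submodule.Quotient.mk_eq_zero U).2 hu)).trans ?_
    exact map_zero h
  · intro hm
    refine ⟨⟨(LinearMap.toSpanSingleton k M.V1 m, U.liftQ (M.ev m) hm),
      (mem_KHom_XU U M _ _).2 ?_⟩, ?_⟩
    · refine (Submodule.liftQ_mkQ U (M.ev m) hm).trans ?_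
      simp
    · change (1 : k) • m = m
      simp

theorem finrank_KHom_XU (U : Submodule k (Fin r → k)) (M : KRep k r) :
    finrank k (KHom (XU U) M) = finrank k (M.socKer U) := by
  rw [← homEval_range U M, LinearMap.finrank_range_of_inj (homEval_injective U M)]

theorem finrank_soc (U : Submodule k (Fin r → k)) (M : KRep k r) :
    finrank k (M.soc U) = finrank k (M.socKer U) + finrank k M.V2 := by
  have e : M.soc U ≃ₗ[k] (M.socKer U) × M.V2 :=
    { toFun := fun p => (⟨p.1.1, p.2.1⟩, p.1.2)
      map_add' := fun _ _ => rfl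
      map_smul' := fun _ _ => rfl
      invFun := fun q => ⟨(q.1.1, q.2), q.1.2, trivial⟩
      left_inv := fun _ => rfl
      right_inv := fun _ => rfl }
  rw [e.finrank_eq, finrank_prod]

/-- For `1 ≤ d < r` and a representation `M` of `Γ_r`, `M` has constant
`d`-socle rank if and only if there is `c ∈ ℕ₀` with `dim_k Hom(X_U, M) = c` for all
`U ∈ Gr_{d,r}`. -/
theorem constSocRank_iff_dim_hom_const (d : ℕ) (hd : 1 ≤ d) (hdr : d < r) (M : KRep k r) :
    KRep.ConstSocRank d M ↔
      ∃ c : ℕ, ∀ U : Submodule k (Fin r → k), finrank k U = d →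
        finrank k (KHom (XU U) M) = c := by
  simp only [KRep.ConstSocRank, finrank_KHom_XU, finrank_soc]
  constructor
  · rintro ⟨c, hc⟩
    exact ⟨c - finrank k M.V2, fun U hU => by have := hc U hU; omega⟩
  · rintro ⟨c, hc⟩
    exact ⟨c + finrank k M.V2, fun U hU => by rw [hc U hU]⟩
end

section
/- Let 1 ≤ d ≤ r−2 and let V ∈ Gr_{d,r}. Then the representation X_V has constant (d+1)-socle rank but does not have constant d-socle rank. In particular, Hom(X_U, X_V) = 0 for every U ∈ Gr_{d+1,r}, while dim_k Hom(X_W, X_V) is not independent of W ∈ Gr_{d,r}. -/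
open Module LinearMap

universe u

variable {k : Type u} [Field k] {r : ℕ}

theorem XV_x_apply (V : Submodule k (Fin r → k)) (u : Fin r → k) (c : k) :
    (XU V).x u c = (c • Submodule.Quotient.mk u : (Fin r → k) ⧸ V) := by
  have h : (XU V).x u c = ∑ i, u i • (c • (V.mkQ (Pi.single i 1))) := by
    exact LinearMap.sum_apply (M := (XU V).V1) (M₂ := (XU V).V2) _ _ _
  rw [h]
  have h2 : u = ∑ i, u i • (Pi.single i 1 : Fin r → k) := by
    ext j
    simp [Finset.sum_apply, Pi.single_apply]
  change _ = c • V.mkQ u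
  conv_rhs => rw [h2]
  rw [map_sum, Finset.smul_sum]
  refine Finset.sum_congr rfl fun i _ => ?_
  rw [map_smul, smul_comm]

theorem XV_socKer_bot (V U : Submodule k (Fin r → k)) (h : ¬ U ≤ V) :
    (XU V).socKer U = ⊥ := by
  obtain ⟨u, hu, huV⟩ := SetLike.not_le_iff_exists.1 h
  rw [eq_bot_iff]
  intro c hc
  simp only [KRep.socKer, Submodule.mem_iInf] at hc
  have h1 := hc u hu
  rw [LinearMap.mem_ker] at h1
  have h2 := (XV_x_apply V u c).symm.trans h1
  rcases smul_eq_zero.1 h2 with h3 | h3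
  · exact h3
  · exact absurd ((Submodule.Quotient.mk_eq_zero V).1 h3) huV

theorem XV_socKer_self (V : Submodule k (Fin r → k)) :
    (XU V).socKer V = ⊤ := by
  rw [eq_top_iff]
  intro c _
  simp only [KRep.socKer, Submodule.mem_iInf]
  intro u hu
  rw [LinearMap.mem_ker]
  refine (XV_x_apply V u c).trans ?_
  rw [(Submodule.Quotient.mk_eq_zero V).2 hu]
  exact smul_zero (M := k) (A := (Fin r → k) ⧸ V) c

theorem KHom_x {M N : KRep k r} (p : (M.V1 →ₗ[k] N.V1) × (M.V2 →ₗ[k] N.V2))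
    (hp : p ∈ KHom M N) (u : Fin r → k) (m : M.V1) : p.2 (M.x u m) = N.x u (p.1 m) := by
  simp only [KRep.x, LinearMap.sum_apply, LinearMap.smul_apply, map_sum, map_smul]
  refine Finset.sum_congr rfl fun i _ => ?_
  have := LinearMap.congr_fun (hp i) m
  simp only [LinearMap.comp_apply] at this
  rw [this]

theorem XV_hom_bot (V U : Submodule k (Fin r → k)) (h : ¬ U ≤ V) :
    KHom (XU U) (XU V) = ⊥ := by
  rw [eq_bot_iff]
  intro p hp
  have key : ∀ m : (XU U).V1, p.1 m = 0 := by
    intro m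
    have h0 : p.1 m ∈ (XU V).socKer U := by
      simp only [KRep.socKer, Submodule.mem_iInf]
      intro u hu
      rw [LinearMap.mem_ker, ← KHom_x p hp]
      have : (XU U).x u m = 0 := by
        refine (XV_x_apply U u m).trans ?_
        rw [(Submodule.Quotient.mk_eq_zero U).2 hu]
        exact smul_zero (M := k) (A := (Fin r → k) ⧸ U) m
      rw [this, map_zero]
    rw [XV_socKer_bot V U h] at h0
    exact h0
  have key2 : ∀ y : (XU U).V2, p.2 y = 0 := by
    intro y
    obtain ⟨u, rfl⟩ := Submodule.Quotient.mk_surjective U y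
    have h1 : (XU U).x u (1 : k) = (Submodule.Quotient.mk u : (Fin r → k) ⧸ U) :=
      (XV_x_apply U u 1).trans (one_smul k _)
    have h2 := KHom_x p hp u (1 : k)
    exact (congrArg p.2 h1).symm.trans
      (h2.trans ((congrArg ((XU V).x u) (key (1 : k))).trans (map_zero _)))
  rw [Submodule.mem_bot]
  exact Prod.ext (LinearMap.ext key) (LinearMap.ext key2)

theorem XV_hom_self (V : Submodule k (Fin r → k)) : KHom (XU V) (XU V) ≠ ⊥ := by
  intro h
  have h1 : ((LinearMap.id, LinearMap.id) :
      ((XU V).V1 →ₗ[k] (XU V).V1) × ((XU V).V2 →ₗ[k] (XU V).V2)) ∈ KHom (XU V) (XU V) := by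
    intro i
    rfl
  rw [h, Submodule.mem_bot] at h1
  have h2 := LinearMap.congr_fun (congrArg Prod.fst h1) (1 : k)
  exact one_ne_zero (α := k) h2

theorem exists_sub_finrank (V : Submodule k (Fin r → k)) (n : ℕ) (hn : n ≤ finrank k V) :
    ∃ P : Submodule k (Fin r → k), P ≤ V ∧ finrank k P = n := by
  induction n with
  | zero => exact ⟨⊥, bot_le, finrank_bot k _⟩
  | succ n ih =>
    obtain ⟨P, hP, hPn⟩ := ih (by omega)
    have : ¬ V ≤ P := fun h => by
      have := Submodule.finrank_mono h
      omega
    obtain ⟨v, hv, hvP⟩ := SetLike.not_le_iff_exists.1 this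
    refine ⟨P ⊔ k ∙ v, sup_le hP (by simpa using hv), ?_⟩
    rw [Submodule.finrank_sup_span_singleton hvP, hPn]

theorem exists_other (V : Submodule k (Fin r → k)) (d : ℕ) (hd : 1 ≤ d) (hdr : d + 2 ≤ r)
    (hV : finrank k V = d) :
    ∃ W : Submodule k (Fin r → k), finrank k W = d ∧ ¬ W ≤ V := by
  obtain ⟨P, hP, hPn⟩ := exists_sub_finrank V (d - 1) (by omega)
  have : ¬ (⊤ : Submodule k (Fin r → k)) ≤ V := fun h => by
    have := Submodule.finrank_mono h
    rw [finrank_top, finrank_fin_fun] at this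
    omega
  obtain ⟨v, _, hv⟩ := SetLike.not_le_iff_exists.1 this
  refine ⟨P ⊔ k ∙ v, ?_, fun h => hv (h ?_)⟩
  · rw [Submodule.finrank_sup_span_singleton (fun h => hv (hP h)), hPn]
    omega
  · exact Submodule.mem_sup_right (Submodule.mem_span_singleton_self v)

/-- Let `r ≥ 3`, `1 ≤ d ≤ r − 2` and `V ∈ Gr_{d,r}`. Then `X_V` has
constant `(d+1)`-socle rank but not constant `d`-socle rank. In particular
`Hom(X_U, X_V) = 0` for every `U ∈ Gr_{d+1,r}`, while `dim_k Hom(X_W, X_V)` is not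
independent of `W ∈ Gr_{d,r}`. -/
theorem XV_constSocRank_succ_not_d (hr : 3 ≤ r) (d : ℕ) (hd : 1 ≤ d) (hdr : d + 2 ≤ r)
    (V : Submodule k (Fin r → k)) (hV : finrank k V = d) :
    KRep.ConstSocRank (d + 1) (XU V) ∧
    ¬ KRep.ConstSocRank d (XU V) ∧
    (∀ U : Submodule k (Fin r → k), finrank k U = d + 1 → KHom (XU U) (XU V) = ⊥) ∧
    ¬ (∃ c : ℕ, ∀ W : Submodule k (Fin r → k), finrank k W = d →
        finrank k (KHom (XU W) (XU V)) = c) := by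
  have hne : ∀ U : Submodule k (Fin r → k), finrank k U = d + 1 → ¬ U ≤ V := by
    intro U hU h
    have := Submodule.finrank_mono h
    omega
  obtain ⟨W, hW, hWV⟩ := exists_other V d hd hdr hV
  refine ⟨⟨finrank k ((⊥ : Submodule k (XU V).V1).prod (⊤ : Submodule k (XU V).V2)), ?_⟩,
    ?_, fun U hU => XV_hom_bot V U (hne U hU), ?_⟩
  · intro U hU
    rw [KRep.soc, XV_socKer_bot V U (hne U hU)]
  · rintro ⟨c, hc⟩
    have h1 := hc V hV
    have h2 := hc W hW
    rw [KRep.soc, XV_socKer_self, Submodule.prod_top, finrank_top] at h1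
    rw [← h1] at h2
    have h3 := Submodule.eq_top_of_finrank_eq h2
    rw [KRep.soc, XV_socKer_bot V W hWV] at h3
    have h4 : (((1 : k), 0) : (XU V).V1 × (XU V).V2) ∈
        (⊥ : Submodule k (XU V).V1).prod (⊤ : Submodule k (XU V).V2) := by
      rw [h3]
      trivial
    exact one_ne_zero (α := k) h4.1
  · rintro ⟨c, hc⟩
    have h1 := hc V hV
    have h2 := hc W hW
    rw [XV_hom_bot V W hWV, finrank_bot] at h2
    rw [← h2] at h1
    exact XV_hom_self V (Submodule.finrank_eq_zero.1 h1)
end
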